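/- arXiv:1005.1033 — 3 statements merged into one kernel-verified Lean document; each statement's English description precedes it below -/
import Mathlib

section
/- For all real numbers u and v, (1/(2√3·π)) · ∫_{ℝ²} exp((1 + iu)·x + (1 + iv)·y − √3·√(x² + y²)) dx dy = ((u − i)² + (v − i)² + 3)^(−3/2), where the complex power is taken with the principal branch. -/
open MeasureTheory Complex

/-!
Subordination writes `exp (-c * |x|)` as a mixture of Gaussians,
`exp (-c * r) = 2 * c / √π * ∫ t in (0, ∞), exp (-c² * t² - r² / (4 * t²))`;
completing the square, this is the Gaussian integral after the Cauchy–Schlömilch substitution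
`w = c * t - r / (2 * t)`. Exchanging the two integrals leaves in `x ∈ ℝᵈ` a Gaussian integral with
a complex linear term, and then in `t` the moment `∫ tᵈ * exp (-D * t²)` with `D = c² - ∑ aᵢ²`,
which produces the power `D ^ (-(d + 1) / 2)`. The exchange is legitimate because taking norms
replaces `a` by its real part, for which `D` is positive.
-/

lemma integral_eq_zero_of_odd {G E : Type*} [MeasurableSpace G] [AddGroup G] [MeasurableNeg G]
    {μ : Measure G} [μ.IsNegInvariant] [NormedAddCommGroup E] [NormedSpace ℝ E] {g : G → E}
    (hg : g.Odd) : ∫ x, g x ∂μ = 0 := by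
  have h : ∫ x, g x ∂μ = -∫ x, g x ∂μ := by
    rw [← integral_neg, ← integral_neg_eq_self g μ]
    simp only [hg _]
  have := IsAddTorsionFree.of_isTorsionFree ℝ E
  exact self_eq_neg.1 h

section CauchySchlomilch

variable {c r : ℝ}

lemma abs_lt_sqrt_sq_add {k : ℝ} (hk : 0 < k) (w : ℝ) : |w| < √(w ^ 2 + k) :=
  Real.lt_sqrt_of_sq_lt (by rw [sq_abs]; linarith)

/-- The inverse of the Cauchy–Schlömilch substitution `t ↦ c * t - r / t` of `(0, ∞)` onto `ℝ`,
namely the positive root `t` of `c * t ^ 2 - w * t - r`. -/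
noncomputable def schlomilchRoot (c r w : ℝ) : ℝ :=
  (w + √(w ^ 2 + 4 * c * r)) / (2 * c)

lemma schlomilchRoot_pos (hc : 0 < c) (hr : 0 < r) (w : ℝ) : 0 < schlomilchRoot c r w := by
  have h : |w| < √(w ^ 2 + 4 * c * r) := abs_lt_sqrt_sq_add (by positivity) w
  exact div_pos (by linarith [neg_abs_le w]) (by positivity)

lemma mul_schlomilchRoot_sub_div (hc : 0 < c) (hr : 0 < r) (w : ℝ) :
    c * schlomilchRoot c r w - r / schlomilchRoot c r w = w := by
  have hpos := schlomilchRoot_pos hc hr w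
  have hroot : c * schlomilchRoot c r w ^ 2 - r = w * schlomilchRoot c r w := by
    have hsq : √(w ^ 2 + 4 * c * r) ^ 2 = w ^ 2 + 4 * c * r := Real.sq_sqrt (by positivity)
    unfold schlomilchRoot
    field_simp
    ring_nf at hsq ⊢
    linear_combination hsq
  field_simp
  linear_combination hroot

lemma schlomilchRoot_injective (hc : 0 < c) (hr : 0 < r) :
    Function.Injective (schlomilchRoot c r) :=
  Function.LeftInverse.injective (g := fun t => c * t - r / t) (mul_schlomilchRoot_sub_div hc hr)

lemma schlomilchRoot_mul_sub_div (hc : 0 < c) (hr : 0 < r) {t : ℝ} (ht : 0 < t) :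
    schlomilchRoot c r (c * t - r / t) = t := by
  have hsqrt : √((c * t - r / t) ^ 2 + 4 * c * r) = c * t + r / t := by
    rw [← Real.sqrt_sq (by positivity : 0 ≤ c * t + r / t)]
    congr 1
    field_simp
    ring
  rw [schlomilchRoot, hsqrt]
  field_simp
  ring

lemma range_schlomilchRoot (hc : 0 < c) (hr : 0 < r) :
    Set.range (schlomilchRoot c r) = Set.Ioi 0 :=
  Set.Subset.antisymm (Set.range_subset_iff.2 (schlomilchRoot_pos hc hr))
    fun t ht => ⟨c * t - r / t, schlomilchRoot_mul_sub_div hc hr ht⟩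

lemma hasDerivAt_schlomilchRoot (hc : 0 < c) (hr : 0 < r) (w : ℝ) :
    HasDerivAt (schlomilchRoot c r) ((2 * c)⁻¹ * (1 + w / √(w ^ 2 + 4 * c * r))) w := by
  have hsqrt : HasDerivAt (fun w : ℝ => √(w ^ 2 + 4 * c * r)) (w / √(w ^ 2 + 4 * c * r)) w := by
    convert! ((hasDerivAt_pow 2 w).add_const (4 * c * r)).sqrt (by positivity) using 1
    simp only [Nat.cast_ofNat, Nat.add_one_sub_one, pow_one]
    rw [mul_div_mul_left _ _ two_ne_zero]
  convert! ((hasDerivAt_id w).add hsqrt).div_const (2 * c) using 1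
  ring

lemma integral_comp_mul_sub_div {E : Type*} [NormedAddCommGroup E] [NormedSpace ℝ E] {f : ℝ → E}
    (hf : Integrable f) (heven : f.Even) (hc : 0 < c) (hr : 0 < r) :
    ∫ t in Set.Ioi 0, f (c * t - r / t) = (2 * c)⁻¹ • ∫ w, f w := by
  -- The derivative of the inverse substitution is `(2 * c)⁻¹` plus an odd function.
  have habs_div (w : ℝ) : |w / √(w ^ 2 + 4 * c * r)| ≤ 1 := by
    rw [abs_div, abs_of_nonneg (Real.sqrt_nonneg _)]
    exact div_le_one_of_le₀ (abs_lt_sqrt_sq_add (by positivity) w).le (Real.sqrt_nonneg _)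
  have hderiv_nonneg (w : ℝ) : 0 ≤ (2 * c)⁻¹ * (1 + w / √(w ^ 2 + 4 * c * r)) :=
    mul_nonneg (by positivity) (by linarith [neg_le_of_abs_le (habs_div w)])
  have hodd : Function.Odd fun w => (w / √(w ^ 2 + 4 * c * r)) • f w := fun w => by
    simp only [heven w, neg_sq, neg_div, neg_smul]
  have hodd_int : Integrable fun w => (w / √(w ^ 2 + 4 * c * r)) • f w :=
    hf.bdd_smul 1 (Measurable.aestronglyMeasurable (by fun_prop)) (.of_forall habs_div)
  calc ∫ t in Set.Ioi 0, f (c * t - r / t)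
      = ∫ w, ((2 * c)⁻¹ * (1 + w / √(w ^ 2 + 4 * c * r))) • f w := by
        rw [← range_schlomilchRoot hc hr, ← Set.image_univ,
          integral_image_eq_integral_abs_deriv_smul .univ
            (fun w _ => (hasDerivAt_schlomilchRoot hc hr w).hasDerivWithinAt)
            (schlomilchRoot_injective hc hr).injOn,
          setIntegral_univ]
        simp only [mul_schlomilchRoot_sub_div hc hr, abs_of_nonneg (hderiv_nonneg _)]
    _ = (2 * c)⁻¹ • ((∫ w, f w) + ∫ w, (w / √(w ^ 2 + 4 * c * r)) • f w) := by
        rw [← integral_add hf hodd_int, ← integral_smul]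
        simp only [mul_smul, add_smul, one_smul]
    _ = (2 * c)⁻¹ • ∫ w, f w := by rw [integral_eq_zero_of_odd hodd, add_zero]

end CauchySchlomilch

lemma integral_exp_neg_sq_mul_sq_sub_sq_div {c r : ℝ} (hc : 0 < c) (hr : 0 ≤ r) :
    ∫ t in Set.Ioi (0 : ℝ), Real.exp (-c ^ 2 * t ^ 2 - r ^ 2 / (4 * t ^ 2)) =
      √Real.pi / (2 * c) * Real.exp (-c * r) := by
  rcases hr.eq_or_lt with rfl | hr
  · have h := integral_gaussian_Ioi (c ^ 2)
    rw [Real.sqrt_div' _ (by positivity), Real.sqrt_sq hc.le] at h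
    simp only [neg_mul, ne_eq, OfNat.ofNat_ne_zero, not_false_eq_true, zero_pow, zero_div, sub_zero,
      mul_zero, Real.exp_zero, mul_one] at h ⊢
    rw [h]
    ring
  · have hgauss : Integrable fun w : ℝ => Real.exp (-w ^ 2) := by
      simpa only [neg_mul, one_mul] using integrable_exp_neg_mul_sq one_pos
    have hgauss_eq : ∫ w : ℝ, Real.exp (-w ^ 2) = √Real.pi := by
      simpa only [neg_mul, one_mul, div_one] using integral_gaussian 1
    calc ∫ t in Set.Ioi (0 : ℝ), Real.exp (-c ^ 2 * t ^ 2 - r ^ 2 / (4 * t ^ 2))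
        = ∫ t in Set.Ioi (0 : ℝ), Real.exp (-(c * t - r / 2 / t) ^ 2) * Real.exp (-c * r) := by
          refine setIntegral_congr_fun measurableSet_Ioi fun t ht => ?_
          have ht0 : t ≠ 0 := ne_of_gt ht
          simp only [← Real.exp_add]
          congr 1
          field_simp
          ring
      _ = √Real.pi / (2 * c) * Real.exp (-c * r) := by
          rw [integral_mul_const, integral_comp_mul_sub_div hgauss (fun w => by rw [neg_sq]) hc
            (half_pos hr), hgauss_eq, smul_eq_mul, div_eq_inv_mul]

section GaussianMoments

variable {D : ℂ}

lemma integrableOn_pow_mul_cexp_neg_mul_sq (hD : 0 < D.re) (n : ℕ) :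
    IntegrableOn (fun t : ℝ => (t : ℂ) ^ n * cexp (-D * t ^ 2)) (Set.Ioi 0) := by
  have hn : (-1 : ℝ) < n := by linarith [n.cast_nonneg (α := ℝ)]
  refine (integrableOn_rpow_mul_exp_neg_mul_sq hD hn).mono'
    (Measurable.aestronglyMeasurable (by fun_prop)) ?_
  filter_upwards [ae_restrict_mem measurableSet_Ioi] with t ht
  rw [norm_mul, norm_pow, norm_cexp_neg_mul_sq, norm_real, Real.norm_of_nonneg (le_of_lt ht),
    Real.rpow_natCast]

lemma two_mul_integral_pow_add_two_mul_cexp_neg_mul_sq (hD : 0 < D.re) (n : ℕ) :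
    2 * D * ∫ t in Set.Ioi (0 : ℝ), (t : ℂ) ^ (n + 2) * cexp (-D * t ^ 2) =
      (n + 1) * ∫ t in Set.Ioi (0 : ℝ), (t : ℂ) ^ n * cexp (-D * t ^ 2) := by
  have hint (k : ℕ) := integrableOn_pow_mul_cexp_neg_mul_sq hD k
  have hderiv (x : ℝ) : HasDerivAt (fun t : ℝ => (t : ℂ) ^ (n + 1) * cexp (-D * t ^ 2))
      ((n + 1) * ((x : ℂ) ^ n * cexp (-D * x ^ 2)) -
        2 * D * ((x : ℂ) ^ (n + 2) * cexp (-D * x ^ 2))) x := by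
    refine HasDerivAt.comp_ofReal (e := fun z : ℂ => z ^ (n + 1) * cexp (-D * z ^ 2)) ?_
    convert! (hasDerivAt_pow (n + 1) (x : ℂ)).mul
      (((hasDerivAt_pow 2 (x : ℂ)).const_mul (-D)).cexp) using 1
    push_cast
    simp only [pow_one]
    ring
  have hderiv_int := ((hint n).const_mul ((n : ℂ) + 1)).sub ((hint (n + 2)).const_mul (2 * D))
  have hftc := integral_Ioi_of_hasDerivAt_of_tendsto' (fun x _ => hderiv x) hderiv_int
    (tendsto_zero_of_hasDerivAt_of_integrableOn_Ioi (fun x _ => hderiv x) hderiv_int (hint (n + 1)))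
  rw [integral_sub ((hint n).const_mul _) ((hint (n + 2)).const_mul _), integral_const_mul,
    integral_const_mul, ofReal_zero, zero_pow n.succ_ne_zero, zero_mul, sub_zero] at hftc
  linear_combination -hftc

lemma ofReal_mul_cpow {x : ℝ} (hx : 0 ≤ x) (z s : ℂ) :
    (x * z) ^ s = (x : ℂ) ^ s * z ^ s := by
  rcases eq_or_ne s 0 with rfl | hs
  · simp only [cpow_zero, mul_one]
  rcases hx.eq_or_lt with rfl | hx
  · simp only [ofReal_zero, zero_mul, zero_cpow hs]
  rcases eq_or_ne z 0 with rfl | hz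
  · simp only [mul_zero, zero_cpow hs]
  have hx0 : (x : ℂ) ≠ 0 := ofReal_ne_zero.2 hx.ne'
  rw [cpow_def_of_ne_zero (mul_ne_zero hx0 hz), log_ofReal_mul hx hz, ofReal_log hx.le, add_mul,
    Complex.exp_add, ← cpow_def_of_ne_zero hx0, ← cpow_def_of_ne_zero hz]

lemma integral_pow_mul_cexp_neg_mul_sq (hD : 0 < D.re) (n : ℕ) :
    ∫ t in Set.Ioi (0 : ℝ), (t : ℂ) ^ n * cexp (-D * t ^ 2) =
      Gamma ((n + 1) / 2) / 2 * D ^ (-((n + 1) / 2) : ℂ) := by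
  have hD0 : D ≠ 0 := by rintro rfl; simp at hD
  induction n using Nat.twoStepInduction with
  | zero =>
    have harg : D.arg ≠ Real.pi := fun h => by linarith [(arg_eq_pi_iff.1 h).1]
    simp only [pow_zero, one_mul, CharP.cast_eq_zero, zero_add]
    rw [integral_gaussian_complex_Ioi hD, div_eq_mul_inv (Real.pi : ℂ),
      ofReal_mul_cpow Real.pi_pos.le, inv_cpow _ _ harg, ← cpow_neg,
      Gamma_one_half_eq]
    ring
  | one =>
    have hone : ((1 : ℕ) + 1 : ℂ) / 2 = 1 := by norm_num
    simp only [pow_one]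
    rw [integral_mul_cexp_neg_mul_sq hD, hone, Gamma_one, cpow_neg_one, mul_inv]
    ring
  | more n ih _ =>
    have hindex : ((n + 2 : ℕ) + 1 : ℂ) / 2 = (n + 1) / 2 + 1 := by push_cast; ring
    have hn : ((n : ℂ) + 1) / 2 ≠ 0 := div_ne_zero n.cast_add_one_ne_zero two_ne_zero
    have hrec := two_mul_integral_pow_add_two_mul_cexp_neg_mul_sq hD n
    rw [ih] at hrec
    apply mul_left_cancel₀ (mul_ne_zero two_ne_zero hD0)
    rw [hrec, hindex, Gamma_add_one _ hn, neg_add, cpow_add _ _ hD0, cpow_neg_one]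
    field_simp

end GaussianMoments

section Subordination

variable {ι : Type*} [Fintype ι]

/-- The integrand in the subordination of `exp (∑ i, a i * x i - c * |x|)` to Gaussians: its
integral over `t ∈ (0, ∞)` is a constant multiple of that function, while for fixed `t` it is
Gaussian in `x`. -/
noncomputable def subordinatedGaussian (a : ι → ℂ) (c : ℝ) (x : ι → ℝ) (t : ℝ) : ℂ :=
  cexp (∑ i, a i * x i + (-c ^ 2 * t ^ 2 - (∑ i, x i ^ 2) / (4 * t ^ 2) : ℝ))

lemma setIntegral_subordinatedGaussian (a : ι → ℂ) {c : ℝ} (hc : 0 < c) (x : ι → ℝ) :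
    ∫ t in Set.Ioi 0, subordinatedGaussian a c x t =
      √Real.pi / (2 * c) * cexp (∑ i, a i * x i - c * √(∑ i, x i ^ 2)) := by
  have h := integral_exp_neg_sq_mul_sq_sub_sq_div hc (Real.sqrt_nonneg (∑ i, x i ^ 2))
  rw [Real.sq_sqrt (Finset.sum_nonneg fun i _ => sq_nonneg (x i))] at h
  simp only [subordinatedGaussian, Complex.exp_add, ← ofReal_exp]
  rw [integral_const_mul, integral_complex_ofReal, h, sub_eq_add_neg, Complex.exp_add]
  push_cast
  ring_nf

lemma subordinatedGaussian_eq (a : ι → ℂ) (c : ℝ) (x : ι → ℝ) (t : ℝ) :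
    subordinatedGaussian a c x t =
      cexp (-c ^ 2 * t ^ 2) *
        cexp (-((4 * t ^ 2)⁻¹ : ℝ) * ∑ i, (x i : ℂ) ^ 2 + ∑ i, a i * x i) := by
  rw [subordinatedGaussian, ← Complex.exp_add]
  push_cast
  ring_nf

lemma integrable_subordinatedGaussian (a : ι → ℂ) (c : ℝ) {t : ℝ} (ht : 0 < t) :
    Integrable fun x => subordinatedGaussian a c x t := by
  simp only [subordinatedGaussian_eq]
  refine (GaussianFourier.integrable_cexp_neg_mul_sum_add ?_ a).const_mul _
  rw [ofReal_re]
  positivity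

lemma integral_subordinatedGaussian (a : ι → ℂ) (c : ℝ) {t : ℝ} (ht : 0 < t) :
    ∫ x, subordinatedGaussian a c x t =
      (2 * √Real.pi) ^ Fintype.card ι *
        (t ^ Fintype.card ι * cexp (-(c ^ 2 - ∑ i, a i ^ 2) * t ^ 2)) := by
  have ht0 : (t : ℂ) ≠ 0 := ofReal_ne_zero.2 ht.ne'
  have hb : 0 < (((4 * t ^ 2)⁻¹ : ℝ) : ℂ).re := by rw [ofReal_re]; positivity
  have hsqrt : ((Real.pi : ℂ) / ((4 * t ^ 2)⁻¹ : ℝ)) ^ (Fintype.card ι / 2 : ℂ) =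
      (2 * √Real.pi * t) ^ Fintype.card ι := by
    have hsq : (Real.pi : ℂ) / ((4 * t ^ 2)⁻¹ : ℝ) = ((2 * √Real.pi * t) ^ 2 : ℝ) := by
      rw [mul_pow, mul_pow, Real.sq_sqrt Real.pi_pos.le]
      push_cast
      field_simp
      ring
    have hroot : (((2 * √Real.pi * t) ^ 2 : ℝ) : ℂ) ^ (1 / 2 : ℂ) = (2 * √Real.pi * t : ℝ) := by
      have h := ofReal_cpow (sq_nonneg (2 * √Real.pi * t)) (1 / 2)
      rw [← Real.sqrt_eq_rpow, Real.sqrt_sq (by positivity)] at h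
      rw [h]
      norm_num
    rw [hsq, div_eq_mul_one_div (Fintype.card ι : ℂ), cpow_nat_mul, hroot]
    push_cast
    rfl
  simp only [subordinatedGaussian_eq]
  rw [integral_const_mul, GaussianFourier.integral_cexp_neg_mul_sum_add hb, hsqrt, mul_left_comm,
    ← Complex.exp_add, mul_pow, mul_assoc]
  congr 3
  push_cast
  field_simp
  ring

lemma norm_subordinatedGaussian (a : ι → ℂ) (c : ℝ) (x : ι → ℝ) (t : ℝ) :
    (‖subordinatedGaussian a c x t‖ : ℂ) =
      subordinatedGaussian (fun i => ((a i).re : ℂ)) c x t := by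
  simp only [subordinatedGaussian, norm_exp, add_re, re_sum, re_mul_ofReal, ofReal_re]
  push_cast
  rfl

lemma re_sq_sub_sum_sq_pos {a : ι → ℂ} {c : ℝ} (ha : ∑ i, (a i).re ^ 2 < c ^ 2) :
    0 < ((c : ℂ) ^ 2 - ∑ i, a i ^ 2).re := by
  have hre : ((c : ℂ) ^ 2 - ∑ i, a i ^ 2).re = c ^ 2 - ∑ i, ((a i).re ^ 2 - (a i).im ^ 2) := by
    simp only [sub_re, re_sum, pow_two, mul_re, ofReal_re, ofReal_im, mul_zero, sub_zero]
  rw [hre, Finset.sum_sub_distrib]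
  linarith [Finset.sum_nonneg fun i (_ : i ∈ Finset.univ) => sq_nonneg (a i).im]

lemma integrable_prod_subordinatedGaussian {a : ι → ℂ} {c : ℝ} (ha : ∑ i, (a i).re ^ 2 < c ^ 2) :
    Integrable (Function.uncurry (subordinatedGaussian a c))
      (volume.prod (volume.restrict (Set.Ioi 0))) := by
  have hmeas : Measurable (Function.uncurry (subordinatedGaussian a c)) := by
    unfold subordinatedGaussian
    fun_prop
  rw [integrable_prod_iff' hmeas.aestronglyMeasurable]
  constructor
  · filter_upwards [ae_restrict_mem measurableSet_Ioi] with t ht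
    exact integrable_subordinatedGaussian a c ht
  · have hre : ∑ i, (((a i).re : ℂ)).re ^ 2 < c ^ 2 := ha
    refine ((integrableOn_pow_mul_cexp_neg_mul_sq (re_sq_sub_sum_sq_pos hre)
      (Fintype.card ι)).const_mul ((2 * √Real.pi) ^ Fintype.card ι : ℂ)).re.congr ?_
    filter_upwards [ae_restrict_mem measurableSet_Ioi] with t ht
    rw [← integral_subordinatedGaussian _ c ht]
    simp only [← norm_subordinatedGaussian, Function.uncurry_apply_pair]
    rw [integral_complex_ofReal]
    exact ofReal_re _

theorem pinned_fourier_transform_G_general {a : ι → ℂ} {c : ℝ} (hc : 0 < c)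
    (ha : ∑ i, (a i).re ^ 2 < c ^ 2) :
    ∫ x : ι → ℝ, cexp (∑ i, a i * x i - c * √(∑ i, x i ^ 2)) =
      c / √Real.pi * (2 * √Real.pi) ^ Fintype.card ι * Gamma ((Fintype.card ι + 1) / 2) *
        (c ^ 2 - ∑ i, a i ^ 2) ^ (-((Fintype.card ι + 1) / 2) : ℂ) := by
  have hc0 : (c : ℂ) ≠ 0 := ofReal_ne_zero.2 hc.ne'
  have hpi : (√Real.pi : ℂ) ≠ 0 := ofReal_ne_zero.2 (Real.sqrt_pos.2 Real.pi_pos).ne'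
  have hswap : √Real.pi / (2 * c) * ∫ x : ι → ℝ, cexp (∑ i, a i * x i - c * √(∑ i, x i ^ 2)) =
      ∫ t in Set.Ioi (0 : ℝ), (2 * √Real.pi) ^ Fintype.card ι *
        (t ^ Fintype.card ι * cexp (-(c ^ 2 - ∑ i, a i ^ 2) * t ^ 2)) := by
    rw [← integral_const_mul]
    simp only [← setIntegral_subordinatedGaussian a hc]
    rw [integral_integral_swap (integrable_prod_subordinatedGaussian ha)]
    exact setIntegral_congr_fun measurableSet_Ioi fun t ht => integral_subordinatedGaussian a c ht
  rw [integral_const_mul, integral_pow_mul_cexp_neg_mul_sq (re_sq_sub_sum_sq_pos ha)] at hswap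
  apply mul_left_cancel₀ (div_ne_zero hpi (mul_ne_zero two_ne_zero hc0))
  rw [hswap]
  field_simp

end Subordination

lemma Gamma_three_div_two_eq : Gamma (3 / 2) = √Real.pi / 2 := by
  have h : Real.Gamma (3 / 2) = √Real.pi / 2 := by
    convert! Real.Gamma_nat_add_half 1 using 1 <;> norm_num
  rw [← ofReal_ofNat 3, ← ofReal_ofNat 2, ← ofReal_div, Gamma_ofReal, h, ofReal_div]

lemma one_div_mul_integral_prod_cexp_sub_mul_sqrt {a b : ℂ} {c : ℝ} (hc : 0 < c)
    (hab : a.re ^ 2 + b.re ^ 2 < c ^ 2) :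
    1 / (2 * c * Real.pi) *
        ∫ p : ℝ × ℝ, cexp (a * p.1 + b * p.2 - c * √(p.1 ^ 2 + p.2 ^ 2)) =
      (c ^ 2 - a ^ 2 - b ^ 2) ^ (-(3 / 2) : ℂ) := by
  have h := pinned_fourier_transform_G_general (a := ![a, b]) hc
    (by rw [Fin.sum_univ_two]; exact hab)
  simp only [Fin.sum_univ_two, Fintype.card_fin, Matrix.cons_val_zero, Matrix.cons_val_one] at h
  have hpi : (Real.pi : ℂ) = √Real.pi ^ 2 := by rw [← ofReal_pow, Real.sq_sqrt Real.pi_pos.le]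
  have hpi0 : (√Real.pi : ℂ) ≠ 0 := ofReal_ne_zero.2 (Real.sqrt_pos.2 Real.pi_pos).ne'
  have hc0 : (c : ℂ) ≠ 0 := ofReal_ne_zero.2 hc.ne'
  have hhalf : ((2 : ℕ) + 1 : ℂ) / 2 = 3 / 2 := by norm_num
  rw [hhalf, Gamma_three_div_two_eq, ← sub_sub] at h
  rw [← (volume_preserving_finTwoArrow ℝ).integral_comp']
  refine (congrArg _ h).trans ?_
  rw [hpi]
  field_simp
  ring

theorem pinned_fourier_transform_G (u v : ℝ) :
    (1 / (2 * (Real.sqrt 3 : ℂ) * (Real.pi : ℂ))) *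
      ∫ p : ℝ × ℝ,
        Complex.exp ((1 + Complex.I * u) * (p.1 : ℂ) + (1 + Complex.I * v) * (p.2 : ℂ) -
            (Real.sqrt 3 : ℂ) * (Real.sqrt (p.1 ^ 2 + p.2 ^ 2) : ℂ)) =
    (((u : ℂ) - Complex.I) ^ 2 + ((v : ℂ) - Complex.I) ^ 2 + 3) ^ (-(3 / 2) : ℂ) := by
  have hsqrt : (√3 : ℂ) ^ 2 = 3 := by
    rw [← ofReal_pow, Real.sq_sqrt zero_le_three, ofReal_ofNat]
  have hre : (1 + I * u).re ^ 2 + (1 + I * v).re ^ 2 < √3 ^ 2 := by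
    rw [Real.sq_sqrt zero_le_three]
    norm_num
  have hbase : (u - I) ^ 2 + (v - I) ^ 2 + 3 =
      (√3 : ℂ) ^ 2 - (1 + I * u) ^ 2 - (1 + I * v) ^ 2 := by
    rw [hsqrt]
    linear_combination (2 + (u : ℂ) ^ 2 + (v : ℂ) ^ 2) * I_sq
  rw [hbase]
  exact one_div_mul_integral_prod_cexp_sub_mul_sqrt (Real.sqrt_pos.2 zero_lt_three) hre
end

section
/- For all real numbers u and v, (1/(2π)) · ∫_{ℝ²} exp((1/4)·((1 + 4iu)·x + (1 + 4iv)·y − √3·√(3x² − 2xy + 3y²))) / √(3x² − 2xy + 3y²) dx dy = ((u − i)(3u + i) + (v − i)(3v + i) + 2uv − 1)^(−1/2), where the complex power is taken with the principal branch. -/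
open MeasureTheory Complex

/-!
If the real part of `(a, b) ∈ ℂ²` has Euclidean norm less than `c`, polar coordinates turn
`∫ exp (a * x + b * y - c * |(x, y)|) / |(x, y)|` over the plane into
`∫ (c - a * cos θ - b * sin θ)⁻¹` over a period: the singular factor cancels the Jacobian. With
`S = √(c² - a² - b²)` the denominator is `(c + S) / 2` times `(1 - α * z) * (1 - β * z⁻¹)`, where
`z = exp (θ * I)` and `|α|, |β| < 1`, so that Cauchy's integral formula gives `2 * π / S`.
A linear substitution reduces a general positive definite form to this case.
-/

theorem integral_eq_abs_det_smul_integral_comp {E F : Type*} [NormedAddCommGroup E]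
    [NormedSpace ℝ E] [MeasurableSpace E] [BorelSpace E] [FiniteDimensional ℝ E]
    [NormedAddCommGroup F] [NormedSpace ℝ F] (μ : Measure E) [μ.IsAddHaarMeasure]
    {f : E →ₗ[ℝ] E} (hf : LinearMap.det f ≠ 0) (g : E → F) :
    ∫ x, g x ∂μ = |LinearMap.det f| • ∫ x, g (f x) ∂μ := by
  have hemb : MeasurableEmbedding f :=
    (f.equivOfDetNeZero hf).toContinuousLinearEquiv.toHomeomorph.measurableEmbedding
  rw [← hemb.integral_map, Measure.map_linearMap_addHaar_eq_smul_addHaar μ hf,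
    integral_smul_measure, ENNReal.toReal_ofReal (abs_nonneg _), smul_smul, abs_inv,
    mul_inv_cancel₀ (abs_ne_zero.2 hf), one_smul]

section Angular

theorem one_sub_mul_ne_zero {α z : ℂ} (hα : ‖α‖ < 1) (hz : ‖z‖ ≤ 1) : 1 - α * z ≠ 0 := by
  intro h
  have hlt : ‖α * z‖ < 1 := by
    rw [norm_mul]
    exact (mul_le_of_le_one_right (norm_nonneg α) hz).trans_lt hα
  rw [← sub_eq_zero.1 h, norm_one] at hlt
  exact hlt.false

theorem integral_inv_one_sub_mul_exp_mul_one_sub_mul_exp_neg {α β : ℂ} (hα : ‖α‖ < 1)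
    (hβ : ‖β‖ < 1) :
    ∫ θ in (0)..2 * Real.pi, ((1 - α * exp (θ * I)) * (1 - β * exp (-(θ * I))))⁻¹ =
      2 * Real.pi * (1 - α * β)⁻¹ := by
  have hdiff : DifferentiableOn ℂ (fun z ↦ (1 - α * z)⁻¹) (Metric.closedBall 0 1) := by
    refine DifferentiableOn.inv (by fun_prop) fun z hz ↦ ?_
    exact one_sub_mul_ne_zero hα (mem_closedBall_zero_iff.1 hz)
  have hcauchy : (∮ z in C(0, 1), (z - β)⁻¹ • (1 - α * z)⁻¹) = (2 * Real.pi * I) • (1 - α * β)⁻¹ :=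
    hdiff.circleIntegral_sub_inv_smul (mem_ball_zero_iff.2 hβ)
  have hparam (θ : ℝ) : deriv (circleMap 0 1) θ •
      ((circleMap 0 1 θ - β)⁻¹ • (1 - α * circleMap 0 1 θ)⁻¹) =
        I * ((1 - α * exp (θ * I)) * (1 - β * exp (-(θ * I))))⁻¹ := by
    have hsub : exp (θ * I) - β = exp (θ * I) * (1 - β * exp (-(θ * I))) := by
      rw [exp_neg]
      field_simp [exp_ne_zero]
    simp only [deriv_circleMap, circleMap_zero, ofReal_one, one_mul, smul_eq_mul, hsub, mul_inv]
    field_simp [exp_ne_zero]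
  simp_rw [circleIntegral, hparam, intervalIntegral.integral_const_mul, smul_eq_mul] at hcauchy
  exact mul_left_cancel₀ I_ne_zero (hcauchy.trans (by ring))

variable {a b S : ℂ} {c : ℝ}

theorem re_sq_sub_sq_sub_sq_pos (h : √(a.re ^ 2 + b.re ^ 2) < c) :
    0 < ((c : ℂ) ^ 2 - a ^ 2 - b ^ 2).re := by
  have hc : a.re ^ 2 + b.re ^ 2 < c ^ 2 := Real.lt_sq_of_sqrt_lt h
  simp only [sq, sub_re, mul_re, ofReal_re, ofReal_im]
  nlinarith [sq_nonneg a.im, sq_nonneg b.im]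

theorem sqrt_im_sq_add_im_sq_le_re (h : √(a.re ^ 2 + b.re ^ 2) < c) (hS : 0 ≤ S.re)
    (hsq : S ^ 2 = c ^ 2 - a ^ 2 - b ^ 2) : √(a.im ^ 2 + b.im ^ 2) ≤ S.re := by
  have hc : a.re ^ 2 + b.re ^ 2 < c ^ 2 := Real.lt_sq_of_sqrt_lt h
  have hre := congrArg re hsq
  simp only [sq, sub_re, mul_re, ofReal_re, ofReal_im] at hre
  refine (Real.sqrt_le_left hS).2 ?_
  nlinarith [sq_nonneg S.im]

theorem norm_sub_mul_I_le_sqrt_add_sqrt (a b : ℂ) :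
    ‖a - b * I‖ ≤ √(a.re ^ 2 + b.re ^ 2) + √(a.im ^ 2 + b.im ^ 2) := by
  have hsplit : a - b * I = (a.re + (-b.re : ℝ) * I) + I * (a.im + (-b.im : ℝ) * I) := by
    conv_lhs => rw [← re_add_im a, ← re_add_im b]
    push_cast
    ring
  calc ‖a - b * I‖
      ≤ ‖(a.re + (-b.re : ℝ) * I : ℂ)‖ + ‖I * (a.im + (-b.im : ℝ) * I)‖ :=
        hsplit ▸ norm_add_le _ _
    _ = √(a.re ^ 2 + b.re ^ 2) + √(a.im ^ 2 + b.im ^ 2) := by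
        rw [norm_mul, norm_I, one_mul, norm_add_mul_I, norm_add_mul_I, neg_sq, neg_sq]

theorem norm_sub_mul_I_lt_norm_add (h : √(a.re ^ 2 + b.re ^ 2) < c) (hS : 0 ≤ S.re)
    (hsq : S ^ 2 = c ^ 2 - a ^ 2 - b ^ 2) : ‖a - b * I‖ < ‖c + S‖ :=
  calc ‖a - b * I‖
      ≤ √(a.re ^ 2 + b.re ^ 2) + √(a.im ^ 2 + b.im ^ 2) := norm_sub_mul_I_le_sqrt_add_sqrt a b
    _ < c + S.re := add_lt_add_of_lt_of_le h (sqrt_im_sq_add_im_sq_le_re h hS hsq)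
    _ = (c + S : ℂ).re := by rw [add_re, ofReal_re]
    _ ≤ ‖c + S‖ := re_le_norm _

theorem sub_mul_cos_sub_mul_sin_eq {c : ℂ} (hcS : c + S ≠ 0) (hsq : S ^ 2 = c ^ 2 - a ^ 2 - b ^ 2)
    (θ : ℂ) :
    c - a * cos θ - b * sin θ = (c + S) / 2 *
      ((1 - (a - b * I) / (c + S) * exp (θ * I)) *
        (1 - (a + b * I) / (c + S) * exp (-(θ * I)))) := by
  have hexp : exp (θ * I) * exp (-(θ * I)) = 1 := by rw [← exp_add, add_neg_cancel, exp_zero]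
  rw [cos, sin, neg_mul]
  generalize exp (θ * I) = z at *
  generalize exp (-(θ * I)) = w at *
  field_simp
  linear_combination -(a ^ 2 + b ^ 2) * hexp - hsq + b ^ 2 * z * w * I_sq

theorem integral_inv_sub_mul_cos_sub_mul_sin (h : √(a.re ^ 2 + b.re ^ 2) < c) :
    ∫ θ : ℝ in -Real.pi..Real.pi, ((c : ℂ) - a * cos θ - b * sin θ)⁻¹ =
      2 * Real.pi * ((c : ℂ) ^ 2 - a ^ 2 - b ^ 2) ^ (-(1 / 2) : ℂ) := by
  set S : ℂ := ((c : ℂ) ^ 2 - a ^ 2 - b ^ 2) ^ (2⁻¹ : ℂ) with hS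
  have hsq : S ^ 2 = (c : ℂ) ^ 2 - a ^ 2 - b ^ 2 := cpow_ofNat_inv_pow _ 2
  have hSre : 0 ≤ S.re := by rw [hS, cpow_inv_two_re]; positivity
  have hS0 : S ≠ 0 := by
    intro hS0
    have := re_sq_sub_sq_sub_sq_pos h
    rw [← hsq, hS0, zero_pow two_ne_zero, zero_re] at this
    exact this.false
  have hα : ‖a - b * I‖ < ‖c + S‖ := norm_sub_mul_I_lt_norm_add h hSre hsq
  have hβ : ‖a + b * I‖ < ‖c + S‖ := by
    simpa using norm_sub_mul_I_lt_norm_add (b := -b) (by simpa using h) hSre (by simpa using hsq)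
  have hcS : (c : ℂ) + S ≠ 0 := norm_pos_iff.1 ((norm_nonneg _).trans_lt hα)
  have hperiodic : Function.Periodic (fun θ : ℝ ↦ ((c : ℂ) - a * cos θ - b * sin θ)⁻¹)
      (2 * Real.pi) := fun θ ↦ by
    simp [cos_add_two_pi, sin_add_two_pi]
  have hshift := hperiodic.intervalIntegral_add_eq (-Real.pi) 0
  rw [show -Real.pi + 2 * Real.pi = Real.pi by ring, zero_add] at hshift
  rw [hshift]
  simp_rw [sub_mul_cos_sub_mul_sin_eq hcS hsq, mul_inv ((c + S) / 2)]
  rw [intervalIntegral.integral_const_mul, integral_inv_one_sub_mul_exp_mul_one_sub_mul_exp_neg,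
    cpow_neg, one_div, ← hS]
  · have : 1 - (a - b * I) / (c + S) * ((a + b * I) / (c + S)) = 2 * S / (c + S) := by
      field_simp
      linear_combination -hsq + b ^ 2 * I_sq
    rw [this]
    field_simp
  · rwa [norm_div, div_lt_one (norm_pos_iff.2 hcS)]
  · rwa [norm_div, div_lt_one (norm_pos_iff.2 hcS)]

end Angular

section Plane

variable {a b : ℂ} {c : ℝ}

theorem sub_sqrt_le_re_sub_mul_cos_sub_mul_sin (a b : ℂ) (c θ : ℝ) :
    c - √(a.re ^ 2 + b.re ^ 2) ≤ ((c : ℂ) - a * cos θ - b * sin θ).re := by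
  have : a.re * Real.cos θ + b.re * Real.sin θ ≤ √(a.re ^ 2 + b.re ^ 2) := by
    refine Real.le_sqrt_of_sq_le ?_
    nlinarith [sq_nonneg (a.re * Real.sin θ - b.re * Real.cos θ), Real.sin_sq_add_cos_sq θ]
  simp only [← ofReal_cos, ← ofReal_sin, sub_re, re_mul_ofReal, ofReal_re]
  linarith

theorem integrable_exp_neg_mul_sub_mul_cos_sub_mul_sin (h : √(a.re ^ 2 + b.re ^ 2) < c) :
    Integrable (fun p : ℝ × ℝ ↦ exp (-(c - a * cos p.2 - b * sin p.2) * p.1))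
      ((volume.restrict (Set.Ioi 0)).prod (volume.restrict (Set.Ioo (-Real.pi) Real.pi))) := by
  set δ := c - √(a.re ^ 2 + b.re ^ 2)
  have hdom : Integrable (fun p : ℝ × ℝ ↦ Real.exp (-δ * p.1))
      ((volume.restrict (Set.Ioi 0)).prod (volume.restrict (Set.Ioo (-Real.pi) Real.pi))) :=
    Integrable.comp_fst (integrableOn_exp_mul_Ioi (by linarith) 0) _
  refine hdom.mono' (Continuous.aestronglyMeasurable (by fun_prop)) ?_
  rw [Measure.prod_restrict]
  filter_upwards [ae_restrict_mem (measurableSet_Ioi.prod measurableSet_Ioo)] with p hp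
  rw [norm_exp, re_mul_ofReal, neg_re]
  gcongr
  · exact hp.1.le
  · exact sub_sqrt_le_re_sub_mul_cos_sub_mul_sin a b c p.2

theorem integral_exp_sub_mul_sqrt_div_sqrt (h : √(a.re ^ 2 + b.re ^ 2) < c) :
    ∫ p : ℝ × ℝ, exp (a * p.1 + b * p.2 - c * √(p.1 ^ 2 + p.2 ^ 2)) / √(p.1 ^ 2 + p.2 ^ 2) =
      2 * Real.pi * ((c : ℂ) ^ 2 - a ^ 2 - b ^ 2) ^ (-(1 / 2) : ℂ) := by
  have hpolar : ∀ p ∈ polarCoord.target,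
      p.1 • (exp (a * (polarCoord.symm p).1 + b * (polarCoord.symm p).2 -
          c * √((polarCoord.symm p).1 ^ 2 + (polarCoord.symm p).2 ^ 2)) /
        √((polarCoord.symm p).1 ^ 2 + (polarCoord.symm p).2 ^ 2)) =
      exp (-(c - a * cos p.2 - b * sin p.2) * p.1) := by
    rintro ⟨r, θ⟩ ⟨hr : 0 < r, -⟩
    have hradius : √((r * Real.cos θ) ^ 2 + (r * Real.sin θ) ^ 2) = r := by
      rw [mul_pow, mul_pow, ← mul_add, Real.cos_sq_add_sin_sq, mul_one, Real.sqrt_sq hr.le]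
    simp only [polarCoord_symm_apply, hradius, real_smul]
    rw [mul_div_cancel₀ _ (ofReal_ne_zero.2 hr.ne')]
    push_cast
    ring_nf
  have hradial (θ : ℝ) : ∫ r : ℝ in Set.Ioi 0, exp (-(c - a * cos θ - b * sin θ) * r) =
      (c - a * cos θ - b * sin θ)⁻¹ := by
    have hre := sub_sqrt_le_re_sub_mul_cos_sub_mul_sin a b c θ
    rw [integral_exp_mul_complex_Ioi (by rw [neg_re]; linarith), ofReal_zero, mul_zero, exp_zero,
      neg_div_neg_eq, one_div]
  rw [← integral_comp_polarCoord_symm,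
    setIntegral_congr_fun polarCoord.open_target.measurableSet hpolar, polarCoord_target,
    Measure.volume_eq_prod, ← Measure.prod_restrict,
    integral_prod_symm _ (integrable_exp_neg_mul_sub_mul_cos_sub_mul_sin h)]
  simp_rw [hradial]
  rw [← integral_Ioc_eq_integral_Ioo,
    ← intervalIntegral.integral_of_le (by linarith [Real.pi_pos]),
    integral_inv_sub_mul_cos_sub_mul_sin h]

end Plane

section QuadraticForm

variable {A B C : ℝ}

-- The substitution completing the square: it turns the form `A x² + 2 B x y + C y²` into
-- `(A C - B²) (x² + y²)`, so that its Jacobian cancels against the square root of the form.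
theorem integral_eq_sqrt_smul_integral_comp {F : Type*} [NormedAddCommGroup F] [NormedSpace ℝ F]
    (hA : 0 < A) (hΔ : 0 < A * C - B ^ 2) (g : ℝ × ℝ → F) :
    ∫ p, g p = √(A * C - B ^ 2) •
      ∫ p : ℝ × ℝ, g ((√(A * C - B ^ 2) * p.1 - B * p.2) / √A, √A * p.2) := by
  set Δ := A * C - B ^ 2
  set L : ℝ × ℝ →ₗ[ℝ] ℝ × ℝ := Matrix.toLin (.finTwoProd ℝ) (.finTwoProd ℝ)
    !![√Δ / √A, -B / √A; 0, √A] with hL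
  have hdet : LinearMap.det L = √Δ := by
    rw [hL, LinearMap.det_toLin, Matrix.det_fin_two_of, mul_zero, sub_zero,
      div_mul_cancel₀ _ (Real.sqrt_pos.2 hA).ne']
  have hLp (p : ℝ × ℝ) : L p = ((√Δ * p.1 - B * p.2) / √A, √A * p.2) := by
    rw [hL, Matrix.toLin_finTwoProd_apply]
    ring_nf
  have hΔ' : 0 < √Δ := Real.sqrt_pos.2 hΔ
  rw [integral_eq_abs_det_smul_integral_comp volume (hdet ▸ hΔ'.ne') g, hdet, abs_of_pos hΔ']
  simp_rw [hLp]

theorem quadratic_substitution_eq (hA : 0 < A) (hΔ : 0 ≤ A * C - B ^ 2) (x y : ℝ) :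
    A * ((√(A * C - B ^ 2) * x - B * y) / √A) ^ 2 +
        2 * B * ((√(A * C - B ^ 2) * x - B * y) / √A) * (√A * y) + C * (√A * y) ^ 2 =
      (A * C - B ^ 2) * (x ^ 2 + y ^ 2) := by
  have hA2 : √A ^ 2 = A := Real.sq_sqrt hA.le
  have hΔ2 := Real.sq_sqrt hΔ
  have := (Real.sqrt_pos.2 hA).ne'
  rw [div_pow, hA2, mul_pow, hA2]
  field_simp
  linear_combination x ^ 2 * hΔ2

theorem dual_quadratic_substitution_eq {K : Type*} [Field K] {A B C s d : K} (hs : s ≠ 0)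
    (hA : s ^ 2 = A) (hd : d ^ 2 = A * C - B ^ 2) (x y : K) :
    (d / s * x) ^ 2 + (s * y - B / s * x) ^ 2 = C * x ^ 2 - 2 * B * x * y + A * y ^ 2 := by
  subst hA
  field_simp
  linear_combination x ^ 2 * hd

theorem integral_exp_sub_mul_sqrt_quadratic_div_sqrt_quadratic (hA : 0 < A)
    (hΔ : 0 < A * C - B ^ 2) {a b : ℂ} {c : ℝ}
    (h : √(C * a.re ^ 2 - 2 * B * a.re * b.re + A * b.re ^ 2) < c * √(A * C - B ^ 2)) :
    ∫ p : ℝ × ℝ, exp (a * p.1 + b * p.2 - c * √(A * p.1 ^ 2 + 2 * B * p.1 * p.2 + C * p.2 ^ 2)) /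
        √(A * p.1 ^ 2 + 2 * B * p.1 * p.2 + C * p.2 ^ 2) =
      2 * Real.pi * (c ^ 2 * (A * C - B ^ 2) - (C * a ^ 2 - 2 * B * a * b + A * b ^ 2)) ^
        (-(1 / 2) : ℂ) := by
  have hs : √A ≠ 0 := (Real.sqrt_pos.2 hA).ne'
  have hs2 : √A ^ 2 = A := Real.sq_sqrt hA.le
  have hd : √(A * C - B ^ 2) ≠ 0 := (Real.sqrt_pos.2 hΔ).ne'
  have hd2 : √(A * C - B ^ 2) ^ 2 = A * C - B ^ 2 := Real.sq_sqrt hΔ.le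
  have hsC : (√A : ℂ) ≠ 0 := ofReal_ne_zero.2 hs
  have hdC : (√(A * C - B ^ 2) : ℂ) ≠ 0 := ofReal_ne_zero.2 hd
  have hd2C : (√(A * C - B ^ 2) : ℂ) ^ 2 = A * C - B ^ 2 := mod_cast hd2
  set a' : ℂ := (√(A * C - B ^ 2) / √A : ℝ) * a with ha'
  set b' : ℂ := √A * b - (B / √A : ℝ) * a with hb'
  have hre : a'.re ^ 2 + b'.re ^ 2 = C * a.re ^ 2 - 2 * B * a.re * b.re + A * b.re ^ 2 := by
    simp only [ha', hb', sub_re, re_ofReal_mul]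
    exact dual_quadratic_substitution_eq hs hs2 hd2 a.re b.re
  have hdual : a' ^ 2 + b' ^ 2 = C * a ^ 2 - 2 * B * a * b + A * b ^ 2 := by
    rw [ha', hb', ofReal_div, ofReal_div]
    exact dual_quadratic_substitution_eq hsC (mod_cast hs2) hd2C a b
  rw [integral_eq_sqrt_smul_integral_comp hA hΔ, ← integral_smul, ← hdual, ← hd2C, ← mul_pow,
    ← ofReal_mul, ← sub_sub, ← integral_exp_sub_mul_sqrt_div_sqrt (hre ▸ h)]
  congr 1 with p
  have hexponent : a * ((√(A * C - B ^ 2) * p.1 - B * p.2) / √A : ℝ) + b * (√A * p.2 : ℝ) =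
      a' * p.1 + b' * p.2 := by
    rw [ha', hb']
    push_cast
    field_simp
    ring
  simp only [quadratic_substitution_eq hA hΔ.le, Real.sqrt_mul hΔ.le, real_smul, hexponent]
  rw [ofReal_mul, ofReal_mul, ← mul_assoc, mul_div_assoc', mul_div_mul_left _ _ hdC]

end QuadraticForm

theorem general_fourier_transform_F (u v : ℝ) :
    (1 / (2 * (Real.pi : ℂ))) *
      ∫ p : ℝ × ℝ,
        Complex.exp ((1 / 4) * ((1 + 4 * Complex.I * u) * (p.1 : ℂ) +
            (1 + 4 * Complex.I * v) * (p.2 : ℂ) -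
            (Real.sqrt 3 : ℂ) *
              (Real.sqrt (3 * p.1 ^ 2 - 2 * p.1 * p.2 + 3 * p.2 ^ 2) : ℂ))) /
          (Real.sqrt (3 * p.1 ^ 2 - 2 * p.1 * p.2 + 3 * p.2 ^ 2) : ℂ) =
    (((u : ℂ) - Complex.I) * (3 * (u : ℂ) + Complex.I) +
        ((v : ℂ) - Complex.I) * (3 * (v : ℂ) + Complex.I) +
        2 * (u : ℂ) * (v : ℂ) - 1) ^ (-(1 / 2) : ℂ) := by
  have hnorm : √(3 * (1 / 4) ^ 2 - 2 * (-1) * (1 / 4) * (1 / 4) + 3 * (1 / 4) ^ 2) <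
      √3 / 4 * √(3 * 3 - (-1) ^ 2) := by
    rw [Real.sqrt_lt' (by positivity), mul_pow, div_pow √3, Real.sq_sqrt (by norm_num),
      Real.sq_sqrt (by norm_num)]
    norm_num
  have hint := integral_exp_sub_mul_sqrt_quadratic_div_sqrt_quadratic (A := 3) (B := -1) (C := 3)
    (a := 1 / 4 + u * I) (b := 1 / 4 + v * I) (c := √3 / 4) (by norm_num) (by norm_num)
    (by simpa using hnorm)
  have hsqrt : (√3 : ℂ) ^ 2 = 3 := mod_cast Real.sq_sqrt zero_le_three
  have hpi : 2 * (Real.pi : ℂ) ≠ 0 := mul_ne_zero two_ne_zero (ofReal_ne_zero.2 Real.pi_ne_zero)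
  rw [one_div, inv_mul_eq_iff_eq_mul₀ hpi]
  have hform (x y : ℝ) : 3 * x ^ 2 + 2 * (-1) * x * y + 3 * y ^ 2 =
      3 * x ^ 2 - 2 * x * y + 3 * y ^ 2 := by ring
  convert hint using 3 with p
  · rw [hform]
    push_cast
    ring_nf
  · push_cast
    linear_combination (-1 / 2) * hsqrt + (3 * u ^ 2 + 3 * v ^ 2 + 2 * u * v - 2) * I_sq
end

section
/- For all real numbers x and y, (1/(2π)²) · ∫_{ℝ²} exp(−iux − ivy) · ((u − i)² + (v − i)² + 3)^(−3/2) du dv = (1/(2√3·π)) · exp(x + y − √3·√(x² + y²)), where the complex power is taken with the principal branch. -/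
open MeasureTheory Complex

/-!
The Gamma integral `z^(-s) Γ(s) = ∫ t^(s-1) exp(-zt) dt`, valid for `Re z > 0`, writes the integrand
as a superposition of Gaussians in `ξ`. After Fubini, the Fourier transform of a Gaussian turns the
shift `ξ - iη` into the factor `exp⟪η, x⟫` and leaves the integral over `t > 0` of
`t^(s-n/2-1) exp(-m²t - |x|²/(4t))`. This is a Bessel function in general, but for `s = (n+1)/2` the
power is `t^(-1/2)`, and the substitution `t = u²` followed by the Cauchy–Schlömilch transformation
`u ↦ mu - |x|/(2u)` reduces it to the Gaussian integral.
-/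

section CauchySchlomilch

variable {E : Type*} [NormedAddCommGroup E] [NormedSpace ℝ E] {a c : ℝ}

theorem setIntegral_Ioi_div_sq_smul_comp_div (f : ℝ → E) {k : ℝ} (hk : 0 < k) :
    ∫ s in Set.Ioi (0 : ℝ), (k / s ^ 2) • f (k / s) = ∫ s in Set.Ioi (0 : ℝ), f s := by
  have inversion := integral_comp_rpow_Ioi (fun s ↦ k • f (k * s)) (p := -1) (by norm_num)
  rw [integral_smul, integral_comp_mul_left_Ioi' f 0 hk, mul_zero] at inversion
  rw [← inversion]
  refine setIntegral_congr_fun measurableSet_Ioi fun s hs ↦ ?_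
  have hs : 0 < s := hs
  have hpow : s ^ (-1 - 1 : ℝ) = (s ^ 2)⁻¹ := by
    rw [← Real.rpow_natCast, ← Real.rpow_neg hs.le]
    norm_num
  simp only [hpow, Real.rpow_neg_one, smul_smul, abs_neg, abs_one, one_mul, div_eq_mul_inv,
    mul_comm k (s ^ 2)⁻¹]

theorem hasDerivAt_mul_sub_div {s : ℝ} (hs : s ≠ 0) :
    HasDerivAt (fun s ↦ a * s - c / s) (a + c / s ^ 2) s := by
  have h := ((hasDerivAt_id s).const_mul a).sub ((hasDerivAt_inv hs).const_mul c)
  exact h.congr_deriv (by ring)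

theorem strictMonoOn_mul_sub_div (ha : 0 < a) (hc : 0 ≤ c) :
    StrictMonoOn (fun s ↦ a * s - c / s) (Set.Ioi 0) := by
  intro s hs t _ hst
  have hmul : a * s < a * t := mul_lt_mul_of_pos_left hst ha
  have hdiv : c / t ≤ c / s := div_le_div_of_nonneg_left hc hs hst.le
  dsimp only
  linarith

theorem image_mul_sub_div_Ioi (ha : 0 < a) (hc : 0 < c) :
    (fun s ↦ a * s - c / s) '' Set.Ioi 0 = Set.univ := by
  refine Set.eq_univ_of_forall fun y ↦ ?_
  set q := √(y ^ 2 + 4 * a * c)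
  have hq : q ^ 2 = y ^ 2 + 4 * a * c := Real.sq_sqrt (by positivity)
  have hpos : 0 < y + q := by
    have : |y| < q := Real.lt_sqrt_of_sq_lt (by rw [sq_abs]; linarith [mul_pos ha hc])
    linarith [neg_abs_le y]
  refine ⟨(y + q) / (2 * a), div_pos hpos (by positivity), ?_⟩
  field_simp
  linear_combination hq

theorem integral_eq_setIntegral_Ioi_comp_mul_sub_div (f : ℝ → E) (ha : 0 < a) (hc : 0 < c) :
    ∫ u, f u = ∫ s in Set.Ioi (0 : ℝ), (a + c / s ^ 2) • f (a * s - c / s) := by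
  rw [← integral_image_eq_integral_deriv_smul_of_monotoneOn measurableSet_Ioi
    (fun s hs ↦ (hasDerivAt_mul_sub_div (ne_of_gt hs)).hasDerivWithinAt)
    (strictMonoOn_mul_sub_div ha hc.le).monotoneOn,
    image_mul_sub_div_Ioi ha hc, setIntegral_univ]

theorem integrableOn_Ioi_smul_comp_mul_sub_div {f : ℝ → E} (hf : Integrable f)
    (ha : 0 < a) (hc : 0 < c) :
    IntegrableOn (fun s ↦ (a + c / s ^ 2) • f (a * s - c / s)) (Set.Ioi 0) := by
  rw [← integrableOn_image_iff_integrableOn_deriv_smul_of_monotoneOn measurableSet_Ioi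
    (fun s hs ↦ (hasDerivAt_mul_sub_div (ne_of_gt hs)).hasDerivWithinAt)
    (strictMonoOn_mul_sub_div ha hc.le).monotoneOn,
    image_mul_sub_div_Ioi ha hc]
  exact hf.integrableOn

theorem integrableOn_Ioi_comp_mul_sub_div {f : ℝ → E} (hf : Integrable f)
    (ha : 0 < a) (hc : 0 < c) :
    IntegrableOn (fun s ↦ f (a * s - c / s)) (Set.Ioi 0) := by
  have hbound : ∀ᵐ s ∂volume.restrict (Set.Ioi (0 : ℝ)), ‖(a + c / s ^ 2)⁻¹‖ ≤ a⁻¹ := by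
    refine Filter.Eventually.of_forall fun s ↦ ?_
    have hle : a ≤ a + c / s ^ 2 := le_add_of_nonneg_right (by positivity)
    rw [Real.norm_of_nonneg (by positivity)]
    exact inv_anti₀ ha hle
  refine ((integrableOn_Ioi_smul_comp_mul_sub_div hf ha hc).bdd_smul a⁻¹
    (Measurable.aestronglyMeasurable (by fun_prop)) hbound).congr
    (Filter.Eventually.of_forall fun s ↦ ?_)
  exact inv_smul_smul₀ (by positivity) _

-- The inversion `s ↦ c / (as)` negates `as - c / s`, so both summands of the Jacobian `a + c / s²`
-- contribute equally.
theorem setIntegral_Ioi_comp_mul_sub_div_of_even {f : ℝ → E} (hf : Integrable f)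
    (heven : ∀ u, f (-u) = f u) (ha : 0 < a) (hc : 0 < c) :
    (2 * a) • ∫ s in Set.Ioi (0 : ℝ), f (a * s - c / s) = ∫ u, f u := by
  set F : ℝ → E := fun s ↦ f (a * s - c / s)
  have hF : IntegrableOn (fun s ↦ a • F s) (Set.Ioi 0) :=
    (integrableOn_Ioi_comp_mul_sub_div hf ha hc).smul a
  have hweighted : IntegrableOn (fun s ↦ (c / s ^ 2) • F s) (Set.Ioi 0) := by
    simpa [F, add_smul, Pi.sub_def] using (integrableOn_Ioi_smul_comp_mul_sub_div hf ha hc).sub hF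
  have hreflect : ∀ s ∈ Set.Ioi (0 : ℝ),
      (c / s ^ 2) • F s = a • (c / a / s ^ 2) • F (c / a / s) := by
    intro s hs
    have hs : s ≠ 0 := ne_of_gt hs
    have harg : a * (c / a / s) - c / (c / a / s) = -(a * s - c / s) := by
      field_simp
      ring
    simp only [F, harg, heven, smul_smul]
    congr 1
    field_simp
  symm
  calc ∫ u, f u
    _ = ∫ s in Set.Ioi (0 : ℝ), (a • F s + (c / s ^ 2) • F s) := by
      simp only [integral_eq_setIntegral_Ioi_comp_mul_sub_div f ha hc, add_smul, F]
    _ = a • (∫ s in Set.Ioi (0 : ℝ), F s) + a • ∫ s in Set.Ioi (0 : ℝ), F s := by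
      rw [integral_add hF hweighted, setIntegral_congr_fun measurableSet_Ioi hreflect,
        integral_smul, integral_smul, setIntegral_Ioi_div_sq_smul_comp_div F (div_pos hc ha)]
    _ = (2 * a) • ∫ s in Set.Ioi (0 : ℝ), F s := by rw [← add_smul, two_mul]

end CauchySchlomilch

theorem setIntegral_Ioi_exp_neg_sq_mul_sub_div {a b : ℝ} (ha : 0 < a) (hb : 0 ≤ b) :
    ∫ s in Set.Ioi (0 : ℝ), Real.exp (-(a * s - b / s) ^ 2) = √Real.pi / (2 * a) := by
  rcases hb.eq_or_lt with rfl | hb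
  · have h := integral_gaussian_Ioi (a ^ 2)
    rw [Real.sqrt_div Real.pi_pos.le, Real.sqrt_sq ha.le, div_div, mul_comm a 2] at h
    simpa [mul_pow] using h
  · have hgauss : ∫ u : ℝ, Real.exp (-u ^ 2) = √Real.pi := by simpa using integral_gaussian 1
    have h := setIntegral_Ioi_comp_mul_sub_div_of_even (f := fun u ↦ Real.exp (-u ^ 2))
      (by simpa using integrable_exp_neg_mul_sq one_pos) (by simp) ha hb
    rw [hgauss, smul_eq_mul] at h
    exact eq_div_of_mul_eq (by positivity) (by rw [mul_comm, h])

theorem setIntegral_Ioi_rpow_neg_half_mul_exp {a b : ℝ} (ha : 0 < a) (hb : 0 ≤ b) :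
    ∫ t in Set.Ioi (0 : ℝ), t ^ (-(1 / 2) : ℝ) * Real.exp (-(a ^ 2 * t) - b ^ 2 / t) =
      √Real.pi / a * Real.exp (-(2 * a * b)) := by
  have hsubst : ∀ s ∈ Set.Ioi (0 : ℝ),
      (2 * s ^ (2 - 1 : ℝ)) • ((s ^ (2 : ℝ)) ^ (-(1 / 2) : ℝ) *
        Real.exp (-(a ^ 2 * s ^ (2 : ℝ)) - b ^ 2 / s ^ (2 : ℝ))) =
      2 * Real.exp (-(2 * a * b)) * Real.exp (-(a * s - b / s) ^ 2) := by
    intro s hs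
    have hs : 0 < s := hs
    have hpow : (s ^ 2) ^ (-(1 / 2) : ℝ) = s⁻¹ := by
      rw [Real.rpow_neg (sq_nonneg s), ← Real.sqrt_eq_rpow, Real.sqrt_sq hs.le]
    have hjacobian : s ^ (2 - 1 : ℝ) = s := by norm_num
    have hsquare : -(a ^ 2 * s ^ 2) - b ^ 2 / s ^ 2 = -(2 * a * b) + -(a * s - b / s) ^ 2 := by
      field_simp
      ring
    rw [Real.rpow_two, hpow, hjacobian, hsquare, Real.exp_add, smul_eq_mul]
    field_simp
  rw [← integral_comp_rpow_Ioi_of_pos two_pos, setIntegral_congr_fun measurableSet_Ioi hsubst,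
    integral_const_mul, setIntegral_Ioi_exp_neg_sq_mul_sub_div ha hb]
  field_simp

section LaplaceTransform

variable {a z : ℂ}

theorem integrableOn_cpow_mul_cexp_neg_mul_Ioi (ha : 0 < a.re) (hz : 0 < z.re) :
    IntegrableOn (fun t : ℝ ↦ (t : ℂ) ^ (a - 1) * cexp (-(z * t))) (Set.Ioi 0) := by
  have hdom := integrableOn_rpow_mul_exp_neg_mul_rpow (s := a.re - 1) (by linarith) one_pos hz
  refine Integrable.mono' hdom (Measurable.aestronglyMeasurable (by fun_prop)) ?_
  filter_upwards [ae_restrict_mem measurableSet_Ioi] with t ht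
  simp [norm_cpow_eq_rpow_re_of_pos ht, Complex.norm_exp]

theorem hasDerivAt_integral_cpow_mul_cexp_neg_mul_Ioi (ha : 0 < a.re) (hz : 0 < z.re) :
    HasDerivAt (fun z : ℂ ↦ ∫ t in Set.Ioi (0 : ℝ), (t : ℂ) ^ (a - 1) * cexp (-(z * t)))
      (∫ t in Set.Ioi (0 : ℝ), (t : ℂ) ^ (a - 1) * (-t * cexp (-(z * t)))) z := by
  have hdom : IntegrableOn (fun t : ℝ ↦ t ^ a.re * Real.exp (-(z.re / 2) * t ^ (1 : ℝ)))
      (Set.Ioi 0) :=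
    integrableOn_rpow_mul_exp_neg_mul_rpow (by linarith) one_pos (half_pos hz)
  have hderiv (w : ℂ) (t : ℝ) : HasDerivAt (fun w : ℂ ↦ (t : ℂ) ^ (a - 1) * cexp (-(w * t)))
      ((t : ℂ) ^ (a - 1) * (-t * cexp (-(w * t)))) w := by
    have hexponent : HasDerivAt (fun w : ℂ ↦ -(w * t)) (-t) w := (hasDerivAt_mul_const (t : ℂ)).neg
    exact (hexponent.cexp.const_mul _).congr_deriv (by ring)
  refine (hasDerivAt_integral_of_dominated_loc_of_deriv_le
    (F := fun w (t : ℝ) ↦ (t : ℂ) ^ (a - 1) * cexp (-(w * t)))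
    (continuous_re.isOpen_preimage _ isOpen_Ioi |>.mem_nhds (half_lt_self hz))
    (Filter.Eventually.of_forall fun w ↦ Measurable.aestronglyMeasurable (by fun_prop))
    (integrableOn_cpow_mul_cexp_neg_mul_Ioi ha hz)
    (Measurable.aestronglyMeasurable (by fun_prop)) ?_ hdom
    (Filter.Eventually.of_forall fun t w _ ↦ hderiv w t)).2
  filter_upwards [ae_restrict_mem measurableSet_Ioi] with t ht w hw
  have ht : 0 < t := ht
  have hw : z.re / 2 < w.re := hw
  calc ‖(t : ℂ) ^ (a - 1) * (-t * cexp (-(w * t)))‖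
    _ = t ^ (a.re - 1) * t * Real.exp (-(w.re * t)) := by
      simp [norm_cpow_eq_rpow_re_of_pos ht, Complex.norm_exp, abs_of_pos ht, mul_assoc]
    _ = t ^ a.re * Real.exp (-(w.re * t)) := by
      rw [Real.rpow_sub_one ht.ne', div_mul_cancel₀ _ ht.ne']
    _ ≤ t ^ a.re * Real.exp (-(z.re / 2) * t ^ (1 : ℝ)) := by
      rw [Real.rpow_one, neg_mul]
      gcongr

-- Both sides are holomorphic in `z` on the right half-plane and agree on the positive reals.
theorem integral_cpow_mul_cexp_neg_mul_Ioi (ha : 0 < a.re) (hz : 0 < z.re) :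
    ∫ t in Set.Ioi (0 : ℝ), (t : ℂ) ^ (a - 1) * cexp (-(z * t)) = z ^ (-a) * Gamma a := by
  let U : Set ℂ := {w | 0 < w.re}
  have hU : IsOpen U := isOpen_lt continuous_const continuous_re
  have hlaplace : AnalyticOnNhd ℂ
      (fun w : ℂ ↦ ∫ t in Set.Ioi (0 : ℝ), (t : ℂ) ^ (a - 1) * cexp (-(w * t))) U :=
    DifferentiableOn.analyticOnNhd (fun w hw ↦
      (hasDerivAt_integral_cpow_mul_cexp_neg_mul_Ioi ha hw).differentiableAt.differentiableWithinAt)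
      hU
  have hpower : AnalyticOnNhd ℂ (fun w : ℂ ↦ w ^ (-a) * Gamma a) U :=
    DifferentiableOn.analyticOnNhd (fun w hw ↦
      ((differentiableAt_id.cpow_const (Or.inl hw)).mul_const _).differentiableWithinAt) hU
  have hreal : ∀ r : ℝ, 0 < r →
      ∫ t in Set.Ioi (0 : ℝ), (t : ℂ) ^ (a - 1) * cexp (-(r * t)) = (r : ℂ) ^ (-a) * Gamma a := by
    intro r hr
    rw [integral_cpow_mul_exp_neg_mul_Ioi ha hr, one_div, cpow_neg,
      inv_cpow _ _ (by rw [arg_ofReal_of_nonneg hr.le]; exact Real.pi_ne_zero.symm)]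
  have hfreq : ∃ᶠ w in nhdsWithin (1 : ℂ) {1}ᶜ,
      ∫ t in Set.Ioi (0 : ℝ), (t : ℂ) ^ (a - 1) * cexp (-(w * t)) = w ^ (-a) * Gamma a := by
    have hreal_near : ∀ᶠ r : ℝ in nhdsWithin 1 {1}ᶜ, 0 < r :=
      (lt_mem_nhds one_pos).filter_mono nhdsWithin_le_nhds
    have hcoe : Filter.Tendsto ((↑) : ℝ → ℂ) (nhdsWithin 1 {1}ᶜ) (nhdsWithin 1 {1}ᶜ) :=
      tendsto_nhdsWithin_iff.mpr ⟨continuous_ofReal.continuousAt.mono_left nhdsWithin_le_nhds,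
        eventually_mem_nhdsWithin.mono fun r hr ↦ by simpa using hr⟩
    exact hcoe.frequently (hreal_near.mono hreal).frequently
  exact hlaplace.eqOn_of_preconnected_of_frequently_eq hpower
    (convex_halfSpace_re_gt 0).isPreconnected (by simp [U]) hfreq hz

end LaplaceTransform

section Subordination

open Module RealInnerProductSpace

variable {V : Type*} [NormedAddCommGroup V] [InnerProductSpace ℝ V]

/-- The value `(ξ - iη) · (ξ - iη)` of the complex-bilinear extension of the inner product, expanded
so that no complexification of `V` is needed. -/
noncomputable def shiftedSq (η ξ : V) : ℂ := ‖ξ‖ ^ 2 - ‖η‖ ^ 2 - 2 * I * ⟪η, ξ⟫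

/-- The integrand of the Gamma integral over `t > 0` which represents
`Γ(s) exp(-i⟪ξ, x⟫) ((ξ - iη) · (ξ - iη) + c)^(-s)` as a superposition of Gaussians in `ξ`. -/
noncomputable def subordinatedKernel (s : ℂ) (c : ℝ) (η x ξ : V) (t : ℝ) : ℂ :=
  cexp (-(I * ⟪ξ, x⟫)) * ((t : ℂ) ^ (s - 1) * cexp (-((shiftedSq η ξ + c) * t)))

variable {s : ℂ} {c t : ℝ} {η : V}

theorem re_shiftedSq (η ξ : V) : (shiftedSq η ξ).re = ‖ξ‖ ^ 2 - ‖η‖ ^ 2 := by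
  simp [shiftedSq, ← ofReal_pow]

theorem integral_subordinatedKernel_Ioi (hs : 0 < s.re) (hc : ‖η‖ ^ 2 < c) (x ξ : V) :
    ∫ t in Set.Ioi (0 : ℝ), subordinatedKernel s c η x ξ t =
      cexp (-(I * ⟪ξ, x⟫)) * (shiftedSq η ξ + c) ^ (-s) * Gamma s := by
  have hre : 0 < (shiftedSq η ξ + c).re := by
    rw [add_re, re_shiftedSq, ofReal_re]
    linarith [sq_nonneg ‖ξ‖]
  simp only [subordinatedKernel]
  rw [integral_const_mul, integral_cpow_mul_cexp_neg_mul_Ioi hs hre, mul_assoc]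

theorem subordinatedKernel_eq_gaussian (s : ℂ) (c : ℝ) (η x ξ : V) (t : ℝ) :
    subordinatedKernel s c η x ξ t = (t : ℂ) ^ (s - 1) * cexp ((‖η‖ ^ 2 - c) * t) *
      cexp (-t * ‖ξ‖ ^ 2 + I * ⟪(2 * t) • η - x, ξ⟫) := by
  rw [subordinatedKernel, mul_left_comm, mul_assoc, ← Complex.exp_add, ← Complex.exp_add,
    shiftedSq, inner_sub_left, inner_smul_left, real_inner_comm x ξ]
  congr 2
  push_cast
  simp only [conj_trivial]
  push_cast
  ring

theorem norm_subordinatedKernel (ht : 0 < t) (x ξ : V) :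
    ‖subordinatedKernel s c η x ξ t‖ =
      t ^ (s.re - 1) * Real.exp (-(c - ‖η‖ ^ 2) * t) * Real.exp (-t * ‖ξ‖ ^ 2) := by
  rw [subordinatedKernel_eq_gaussian, norm_mul, norm_mul, norm_cpow_eq_rpow_re_of_pos ht,
    Complex.norm_exp, Complex.norm_exp]
  simp [← ofReal_pow]

variable [FiniteDimensional ℝ V] [MeasurableSpace V] [BorelSpace V]

theorem integral_subordinatedKernel (ht : 0 < t) (x : V) :
    ∫ ξ, subordinatedKernel s c η x ξ t =
      (Real.pi : ℂ) ^ (finrank ℝ V / 2 : ℂ) * cexp ⟪η, x⟫ *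
        ((t : ℂ) ^ (s - finrank ℝ V / 2 - 1) * cexp (-(c * t) - ‖x‖ ^ 2 / (4 * t))) := by
  have htc : (t : ℂ) ≠ 0 := ofReal_ne_zero.mpr ht.ne'
  have hnorm : (‖(2 * t) • η - x‖ : ℂ) ^ 2 = 4 * t ^ 2 * ‖η‖ ^ 2 - 4 * t * ⟪η, x⟫ + ‖x‖ ^ 2 := by
    rw [← ofReal_pow, norm_sub_sq_real, norm_smul, inner_smul_left, mul_pow, Real.norm_eq_abs,
      sq_abs]
    simp only [conj_trivial]
    push_cast
    ring
  have hpow : (t : ℂ) ^ (s - 1) * (Real.pi / t : ℂ) ^ (finrank ℝ V / 2 : ℂ) =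
      (Real.pi : ℂ) ^ (finrank ℝ V / 2 : ℂ) * (t : ℂ) ^ (s - finrank ℝ V / 2 - 1) := by
    rw [div_eq_mul_inv, ← ofReal_inv, mul_cpow_ofReal_nonneg Real.pi_pos.le (inv_pos.2 ht).le,
      ofReal_inv, inv_cpow _ _ (by rw [arg_ofReal_of_nonneg ht.le]; exact Real.pi_ne_zero.symm),
      ← cpow_neg, mul_left_comm, ← cpow_add _ _ htc]
    ring_nf
  have hexp : cexp ((‖η‖ ^ 2 - c) * t) * cexp (I ^ 2 * ‖(2 * t) • η - x‖ ^ 2 / (4 * t)) =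
      cexp ⟪η, x⟫ * cexp (-(c * t) - ‖x‖ ^ 2 / (4 * t)) := by
    rw [← Complex.exp_add, ← Complex.exp_add, hnorm, I_sq]
    congr 1
    field_simp
    ring
  simp only [subordinatedKernel_eq_gaussian]
  rw [integral_const_mul, GaussianFourier.integral_cexp_neg_mul_sq_norm_add (by simpa using ht)]
  linear_combination cexp ((‖η‖ ^ 2 - c) * t) * cexp (I ^ 2 * ‖(2 * t) • η - x‖ ^ 2 / (4 * t)) *
    hpow + (Real.pi : ℂ) ^ (finrank ℝ V / 2 : ℂ) * (t : ℂ) ^ (s - finrank ℝ V / 2 - 1) * hexp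

theorem integral_norm_subordinatedKernel (ht : 0 < t) (x : V) :
    ∫ ξ, ‖subordinatedKernel s c η x ξ t‖ = Real.pi ^ (finrank ℝ V / 2 : ℝ) *
      (t ^ (s.re - finrank ℝ V / 2 - 1) * Real.exp (-(c - ‖η‖ ^ 2) * t)) := by
  simp only [norm_subordinatedKernel ht]
  rw [integral_const_mul, GaussianFourier.integral_rexp_neg_mul_sq_norm ht,
    Real.div_rpow Real.pi_pos.le ht.le, sub_right_comm, Real.rpow_sub ht (s.re - 1)]
  ring

theorem integrable_subordinatedKernel (hs : finrank ℝ V / 2 < s.re) (hc : ‖η‖ ^ 2 < c) (x : V) :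
    Integrable (Function.uncurry (subordinatedKernel s c η x))
      ((volume : Measure V).prod (volume.restrict (Set.Ioi 0))) := by
  have hmeas : Measurable (Function.uncurry (subordinatedKernel s c η x)) := by
    unfold subordinatedKernel shiftedSq Function.uncurry
    fun_prop
  refine (integrable_prod_iff' hmeas.aestronglyMeasurable).mpr ⟨?_, ?_⟩
  · filter_upwards [ae_restrict_mem measurableSet_Ioi] with t ht
    simp only [Function.uncurry, subordinatedKernel_eq_gaussian]
    exact (GaussianFourier.integrable_cexp_neg_mul_sq_norm_add (by simpa using ht) I _).const_mul _
  · have hgamma := integrableOn_rpow_mul_exp_neg_mul_rpow (s := s.re - finrank ℝ V / 2 - 1)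
      (by linarith) one_pos (sub_pos.mpr hc)
    refine (hgamma.const_mul (Real.pi ^ (finrank ℝ V / 2 : ℝ))).congr ?_
    filter_upwards [ae_restrict_mem measurableSet_Ioi] with t ht
    simp only [Function.uncurry, integral_norm_subordinatedKernel ht, Real.rpow_one]

theorem integral_cexp_mul_shiftedSq_add_cpow_mul_Gamma (hs : finrank ℝ V / 2 < s.re)
    (hc : ‖η‖ ^ 2 < c) (x : V) :
    (∫ ξ : V, cexp (-(I * ⟪ξ, x⟫)) * (shiftedSq η ξ + c) ^ (-s)) * Gamma s =
      (Real.pi : ℂ) ^ (finrank ℝ V / 2 : ℂ) * cexp ⟪η, x⟫ * ∫ t in Set.Ioi (0 : ℝ),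
        (t : ℂ) ^ (s - finrank ℝ V / 2 - 1) * cexp (-(c * t) - ‖x‖ ^ 2 / (4 * t)) := by
  have hs_pos : 0 < s.re := lt_of_le_of_lt (by positivity) hs
  calc
    _ = ∫ ξ, ∫ t in Set.Ioi (0 : ℝ), subordinatedKernel s c η x ξ t := by
      simp only [integral_subordinatedKernel_Ioi hs_pos hc, integral_mul_const]
    _ = ∫ t in Set.Ioi (0 : ℝ), ∫ ξ, subordinatedKernel s c η x ξ t :=
      integral_integral_swap (integrable_subordinatedKernel hs hc x)
    _ = _ := by
      rw [setIntegral_congr_fun measurableSet_Ioi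
        fun t ht ↦ integral_subordinatedKernel (s := s) (c := c) (η := η) ht x, integral_const_mul]

theorem setIntegral_Ioi_cpow_neg_half_mul_cexp {m r : ℝ} (hm : 0 < m) (hr : 0 ≤ r) :
    ∫ t in Set.Ioi (0 : ℝ), (t : ℂ) ^ (-(1 / 2) : ℂ) * cexp (-(m ^ 2 * t) - r ^ 2 / (4 * t)) =
      (√Real.pi / m * Real.exp (-(m * r)) : ℝ) := by
  rw [← show 2 * m * (r / 2) = m * r by ring,
    ← setIntegral_Ioi_rpow_neg_half_mul_exp hm (by positivity : 0 ≤ r / 2),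
    ← integral_complex_ofReal]
  refine setIntegral_congr_fun measurableSet_Ioi fun t ht ↦ ?_
  have ht : 0 < t := ht
  rw [ofReal_mul, ofReal_cpow ht.le]
  push_cast
  rw [div_pow, div_div]
  norm_num

theorem integral_cexp_mul_shiftedSq_add_sq_cpow {m : ℝ} (hm : ‖η‖ < m) (x : V) :
    ∫ ξ : V, cexp (-(I * ⟪ξ, x⟫)) * (shiftedSq η ξ + m ^ 2) ^ (-((finrank ℝ V + 1) / 2) : ℂ) =
      (Real.pi ^ ((finrank ℝ V + 1) / 2 : ℝ) / (m * Real.Gamma ((finrank ℝ V + 1) / 2)) *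
        Real.exp (⟪η, x⟫ - m * ‖x‖) : ℝ) := by
  have hm_pos : 0 < m := (norm_nonneg η).trans_lt hm
  let s : ℝ := (finrank ℝ V + 1) / 2
  have hlt : finrank ℝ V / 2 < s := div_lt_div_of_pos_right (lt_add_one _) two_pos
  have hs : (s : ℂ) = (finrank ℝ V + 1) / 2 := by simp [s]
  have hGamma : (Real.Gamma s : ℂ) ≠ 0 :=
    ofReal_ne_zero.mpr (Real.Gamma_pos_of_pos (by positivity)).ne'
  have hexponent : (s - finrank ℝ V / 2 - 1 : ℂ) = -(1 / 2) := by
    rw [hs]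
    ring
  have hpi : (Real.pi : ℂ) ^ (finrank ℝ V / 2 : ℂ) * (√Real.pi : ℝ) = (Real.pi ^ s : ℝ) := by
    rw [show s = finrank ℝ V / 2 + 1 / 2 by ring, Real.rpow_add Real.pi_pos, ← Real.sqrt_eq_rpow,
      ofReal_mul, ofReal_cpow Real.pi_pos.le]
    simp only [ofReal_div, ofReal_natCast, ofReal_ofNat]
  have h := integral_cexp_mul_shiftedSq_add_cpow_mul_Gamma (s := s) (c := m ^ 2) (η := η)
    hlt (pow_lt_pow_left₀ hm (norm_nonneg η) two_ne_zero) x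
  simp only [hexponent, ofReal_pow] at h
  rw [setIntegral_Ioi_cpow_neg_half_mul_cexp hm_pos (norm_nonneg x), Gamma_ofReal, hs] at h
  rw [eq_div_of_mul_eq hGamma h, sub_eq_add_neg, Real.exp_add]
  change _ = ((Real.pi ^ s / (m * Real.Gamma s) * _ : ℝ) : ℂ)
  simp only [ofReal_mul, ofReal_div, ← hpi]
  push_cast
  field_simp

theorem shiftedSq_toLp_prod (a b : ℝ) (p : ℝ × ℝ) :
    shiftedSq (WithLp.toLp 2 (a, b)) (WithLp.toLp 2 p) =
      (p.1 - a * I) ^ 2 + (p.2 - b * I) ^ 2 := by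
  simp only [shiftedSq, ← ofReal_pow, WithLp.prod_norm_sq_eq_of_L2, WithLp.prod_inner_apply]
  simp only [WithLp.toLp_fst, WithLp.toLp_snd, Real.norm_eq_abs, sq_abs, RCLike.inner_apply,
    Real.ringHom_apply, ofReal_add, ofReal_pow, ofReal_mul]
  linear_combination -(a ^ 2 + b ^ 2 : ℂ) * I_sq

theorem pi_rpow_three_halves_div_Gamma_three_halves :
    Real.pi ^ (3 / 2 : ℝ) / Real.Gamma (3 / 2) = 2 * Real.pi := by
  have hGamma : Real.Gamma (3 / 2) = √Real.pi / 2 := by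
    rw [show (3 / 2 : ℝ) = 1 / 2 + 1 by norm_num, Real.Gamma_add_one (by norm_num),
      Real.Gamma_one_half_eq]
    ring
  have hpow : Real.pi ^ (3 / 2 : ℝ) = Real.pi * √Real.pi := by
    rw [show (3 / 2 : ℝ) = 1 + 1 / 2 by norm_num, Real.rpow_add Real.pi_pos, Real.rpow_one,
      Real.sqrt_eq_rpow]
  rw [hGamma, hpow]
  field_simp

theorem pinned_inverse_fourier_transform_general {a b m : ℝ} (hm : √(a ^ 2 + b ^ 2) < m) (x y : ℝ) :
    ∫ p : ℝ × ℝ, cexp (-(I * p.1 * x) - I * p.2 * y) *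
        ((p.1 - a * I) ^ 2 + (p.2 - b * I) ^ 2 + m ^ 2) ^ (-(3 / 2) : ℂ) =
      (2 * Real.pi / m * Real.exp (a * x + b * y - m * √(x ^ 2 + y ^ 2)) : ℝ) := by
  have hnorm (u v : ℝ) : ‖WithLp.toLp 2 (u, v)‖ = √(u ^ 2 + v ^ 2) := by
    simp [WithLp.prod_norm_eq_of_L2]
  have hrank : finrank ℝ (WithLp 2 (ℝ × ℝ)) = 2 := by
    simp [(WithLp.linearEquiv 2 ℝ (ℝ × ℝ)).finrank_eq]
  have hinner (p : ℝ × ℝ) (u v : ℝ) :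
      ⟪WithLp.toLp 2 p, WithLp.toLp 2 (u, v)⟫ = p.1 * u + p.2 * v := by
    simp [WithLp.prod_inner_apply, mul_comm]
  have hphase (p : ℝ × ℝ) :
      -(I * p.1 * x) - I * p.2 * y = -(I * (p.1 * x + p.2 * y : ℝ)) := by
    push_cast
    ring
  have hexponent : -(3 / 2) = (-(((2 : ℕ) + 1) / 2) : ℂ) := by norm_num
  have hconst : 2 * Real.pi / m =
      Real.pi ^ (((2 : ℕ) + 1) / 2 : ℝ) / (m * Real.Gamma (((2 : ℕ) + 1) / 2)) := by
    rw [← pi_rpow_three_halves_div_Gamma_three_halves, div_div, mul_comm m]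
    norm_num
  have htransform :=
    integral_cexp_mul_shiftedSq_add_sq_cpow (hnorm a b ▸ hm) (WithLp.toLp 2 (x, y))
  rw [← (WithLp.volume_preserving_toLp ℝ ℝ).integral_comp
    (MeasurableEquiv.toLp 2 (ℝ × ℝ)).measurableEmbedding, hrank] at htransform
  simpa only [shiftedSq_toLp_prod, hinner, hnorm, hphase, hexponent, hconst] using htransform

end Subordination

theorem pinned_inverse_fourier_transform (x y : ℝ) :
    (1 / (2 * (Real.pi : ℂ)) ^ 2) *
      ∫ p : ℝ × ℝ,
        Complex.exp (-(Complex.I * (p.1 : ℂ) * (x : ℂ)) - Complex.I * (p.2 : ℂ) * (y : ℂ)) *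
          ((((p.1 : ℂ) - Complex.I) ^ 2 + ((p.2 : ℂ) - Complex.I) ^ 2 + 3) ^ (-(3 / 2) : ℂ)) =
    ((1 / (2 * Real.sqrt 3 * Real.pi) *
        Real.exp (x + y - Real.sqrt 3 * Real.sqrt (x ^ 2 + y ^ 2)) : ℝ) : ℂ) := by
  have hsq : (√3 : ℂ) ^ 2 = 3 := by
    rw [← ofReal_pow, Real.sq_sqrt (by norm_num)]
    norm_num
  have h := pinned_inverse_fourier_transform_general (a := 1) (b := 1) (m := √3)
    (Real.sqrt_lt_sqrt (by norm_num) (by norm_num)) x y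
  simp only [ofReal_one, one_mul, hsq] at h
  rw [h]
  push_cast
  field_simp
end
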